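/- arXiv:2601.19848 — 2 statements merged into one kernel-verified Lean document; each statement's English description precedes it below -/
import Mathlib

section
/- Let k ≥ 1 and let G ⊆ P_n be a stabilizer group of dimension n − k with distance d(G) = d, admitting an 𝔽₂-basis S = {g_1, …, g_{n−k}} with wt(g_i) ≤ w for all i. Suppose for some 1 ≤ T < n − k there exist T elements g_{i_1}, …, g_{i_T} of S with |supp(g_{i_1}) ∪ … ∪ supp(g_{i_T})| = T. Then there is a partition of Fin n into a T-element set A and its complement B such that, under the induced identification P_n ≅ P_A × P_B, G decomposes as a tensor product G_A ⊗ G_B, where G_A ⊆ P_A is a T-dimensional isotropic subspace (so d(G_A) = ⊤ and it is a [[T,0]] code) with W(G_A) ≤ w, and G_B ⊆ P_B is a stabilizer group of dimension (n−T) − k with d(G_B) = d and W(G_B) ≤ w. -/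
open scoped Classical

noncomputable section

/-- Pauli strings modulo phase, indexed by a finite type. -/
abbrev PauliT (ι : Type) : Type := ι → ZMod 2 × ZMod 2

abbrev Pauli (n : ℕ) : Type := PauliT (Fin n)

variable {ι : Type} [Fintype ι]

/-- Weight of a Pauli string. -/
def wt (v : PauliT ι) : ℕ := (Finset.univ.filter fun i => v i ≠ 0).card

/-- Support of a Pauli string. -/
def suppF (v : PauliT ι) : Finset ι := Finset.univ.filter fun i => v i ≠ 0

/-- Symplectic form encoding commutation. -/
def sympl (u v : PauliT ι) : ZMod 2 :=
  ∑ i, ((u i).1 * (v i).2 + (u i).2 * (v i).1)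

/-- `G` is a stabilizer group (isotropic subspace). -/
def IsStabilizer (G : Submodule (ZMod 2) (PauliT ι)) : Prop :=
  ∀ u ∈ G, ∀ v ∈ G, sympl u v = 0

/-- Membership in the symplectic dual `G^⊥`. -/
def inDual (G : Submodule (ZMod 2) (PauliT ι)) (v : PauliT ι) : Prop :=
  ∀ g ∈ G, sympl v g = 0

/-- Distance: minimum weight of an element of `G^⊥ \ G`, `⊤` if none exists. -/
def distG (G : Submodule (ZMod 2) (PauliT ι)) : ℕ∞ :=
  sInf ((fun v => (wt v : ℕ∞)) '' {v | inDual G v ∧ v ∉ G})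

/-- `g` is an `𝔽₂`-basis (indexed family) of `G`. -/
def IsBasisFam {r : ℕ} (G : Submodule (ZMod 2) (PauliT ι)) (g : Fin r → PauliT ι) : Prop :=
  LinearIndependent (ZMod 2) g ∧ Submodule.span (ZMod 2) (Set.range g) = G

/-- The weight of a stabilizer group: optimal maximum generator weight over bases. -/
def Wgt (G : Submodule (ZMod 2) (PauliT ι)) : ℕ∞ :=
  ⨅ (r : ℕ) (g : Fin r → PauliT ι) (_ : IsBasisFam G g),
    Finset.univ.sup fun i => (wt (g i) : ℕ∞)

/-- Optimal weight over all `[[n,k,d]]` stabilizer codes. -/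
def Wopt (n k : ℕ) (d : ℕ∞) : ℕ∞ :=
  ⨅ (G : Submodule (ZMod 2) (Pauli n))
    (_ : IsStabilizer G ∧ Module.finrank (ZMod 2) ↥G = n - k ∧ distG G = d),
    Wgt G

/-- Weight enumerator: number of elements of `G` of weight `j`. -/
def Aj (G : Submodule (ZMod 2) (PauliT ι)) (j : ℕ) : ℕ :=
  Nat.card {g : PauliT ι // g ∈ G ∧ wt g = j}

/-- A weight-optimal generating set. -/
def IsWeightOptimalBasis {r : ℕ} (G : Submodule (ZMod 2) (PauliT ι))
    (g : Fin r → PauliT ι) : Prop :=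
  IsBasisFam G g ∧ Monotone (fun i => wt (g i)) ∧
    ∀ h : Fin r → PauliT ι, IsBasisFam G h → Monotone (fun i => wt (h i)) →
      ∀ i, wt (g i) ≤ wt (h i)

/-- Set of average generator weights over all bases of `G`. -/
def WavgSet (G : Submodule (ZMod 2) (PauliT ι)) : Set ℚ :=
  {x | ∃ (r : ℕ) (g : Fin r → PauliT ι), IsBasisFam G g ∧
        x = (∑ i, (wt (g i) : ℚ)) / (r : ℚ)}

/-- Splitting of Pauli strings along a bipartition given by a predicate. -/
def splitEquiv (p : ι → Prop) :
    PauliT ι ≃ₗ[ZMod 2] PauliT {x // p x} × PauliT {x // ¬ p x} :=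
  (LinearEquiv.funCongrLeft (ZMod 2) (ZMod 2 × ZMod 2) (Equiv.sumCompl p)).trans
    (LinearEquiv.sumArrowLequivProdArrow _ _ _ _)

/-- Tensor product of subspaces along a bipartition. -/
def tensorAlong (p : ι → Prop)
    (GA : Submodule (ZMod 2) (PauliT {x // p x}))
    (GB : Submodule (ZMod 2) (PauliT {x // ¬ p x})) :
    Submodule (ZMod 2) (PauliT ι) :=
  (GA.prod GB).comap (splitEquiv p).toLinearMap

/-- Decomposability as a tensor product over a nontrivial bipartition. -/
def Decomposable (G : Submodule (ZMod 2) (PauliT ι)) : Prop :=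
  ∃ p : ι → Prop, (∃ x, p x) ∧ (∃ x, ¬ p x) ∧
    ∃ (GA : Submodule (ZMod 2) (PauliT {x // p x}))
      (GB : Submodule (ZMod 2) (PauliT {x // ¬ p x})),
      G = tensorAlong p GA GB

/-- Identification of `Pauli (n₁+n₂)` with `Pauli n₁ × Pauli n₂`. -/
def pauliSumEquiv (n₁ n₂ : ℕ) :
    Pauli (n₁ + n₂) ≃ₗ[ZMod 2] Pauli n₁ × Pauli n₂ :=
  (LinearEquiv.funCongrLeft (ZMod 2) (ZMod 2 × ZMod 2) finSumFinEquiv).trans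
    (LinearEquiv.sumArrowLequivProdArrow _ _ _ _)

/-- Tensor product of stabilizer subspaces on `n₁` and `n₂` qubits. -/
def tensorFin {n₁ n₂ : ℕ} (G₁ : Submodule (ZMod 2) (Pauli n₁))
    (G₂ : Submodule (ZMod 2) (Pauli n₂)) :
    Submodule (ZMod 2) (Pauli (n₁ + n₂)) :=
  (G₁.prod G₂).comap (pauliSumEquiv n₁ n₂).toLinearMap


/-!
The span of the `T` generators is an isotropic space of dimension `T` living on the `T` qubits
of `A`, so it is Lagrangian there: a Pauli string on `A` commuting with it belongs to it. An
element of `G` commutes with these generators, and this only involves its restriction to `A`,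
which therefore lies in the span. Hence `G` also contains the part of each of its elements outside
`A`, and `G` factorizes. The distance of a product is the minimum of the two distances, and the
Lagrangian factor has distance `⊤`.
-/

section SymplecticForm

lemma sympl_comm (u v : PauliT ι) : sympl u v = sympl v u :=
  Finset.sum_congr rfl fun _ _ => by ring

lemma sympl_add_left (u u' v : PauliT ι) : sympl (u + u') v = sympl u v + sympl u' v := by
  simp only [sympl, Pi.add_apply, Prod.fst_add, Prod.snd_add, ← Finset.sum_add_distrib]
  exact Finset.sum_congr rfl fun _ _ => by ring

lemma sympl_smul_left (c : ZMod 2) (u v : PauliT ι) : sympl (c • u) v = c * sympl u v := by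
  simp only [sympl, Pi.smul_apply, Prod.smul_fst, Prod.smul_snd, smul_eq_mul, Finset.mul_sum]
  exact Finset.sum_congr rfl fun _ _ => by ring

/-- The symplectic form `sympl` bundled as a bilinear form, to give access to the theory of
orthogonal complements. -/
def symplForm (ι : Type) [Fintype ι] : LinearMap.BilinForm (ZMod 2) (PauliT ι) :=
  LinearMap.mk₂ (ZMod 2) sympl sympl_add_left sympl_smul_left
    (fun u v v' => by simp only [sympl_comm u, sympl_add_left])
    (fun c u v => by simp only [sympl_comm u, sympl_smul_left, smul_eq_mul])

lemma symplForm_apply (u v : PauliT ι) : symplForm ι u v = sympl u v := rfl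

lemma sympl_zero_right (u : PauliT ι) : sympl u 0 = 0 := map_zero (symplForm ι u)

lemma sympl_single_right (u : PauliT ι) (i : ι) (a : ZMod 2 × ZMod 2) :
    sympl u (Pi.single i a) = (u i).1 * a.2 + (u i).2 * a.1 := by
  rw [sympl, Finset.sum_eq_single i (fun j _ hj => by simp [Pi.single_eq_of_ne hj]) (by simp),
    Pi.single_eq_same]

lemma eq_zero_of_forall_sympl_eq_zero {u : PauliT ι} (hu : ∀ v, sympl u v = 0) : u = 0 := by
  funext i
  have hX : (u i).1 = 0 := by simpa [sympl_single_right] using hu (Pi.single i (0, 1))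
  have hZ : (u i).2 = 0 := by simpa [sympl_single_right] using hu (Pi.single i (1, 0))
  exact Prod.ext hX hZ

lemma symplForm_nondegenerate : (symplForm ι).Nondegenerate :=
  ⟨fun _ hu => eq_zero_of_forall_sympl_eq_zero hu,
    fun u hu => eq_zero_of_forall_sympl_eq_zero fun v => sympl_comm u v ▸ hu v⟩

lemma finrank_pauliT : Module.finrank (ZMod 2) (PauliT ι) = 2 * Fintype.card ι := by
  simp [Module.finrank_pi_fintype, mul_comm]

end SymplecticForm

section Distance

variable {G : Submodule (ZMod 2) (PauliT ι)}

lemma inDual_zero : inDual G 0 :=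
  fun g _ => (sympl_comm 0 g).trans (sympl_zero_right g)

lemma mem_orthogonal_symplForm_iff {v : PauliT ι} :
    v ∈ (symplForm ι).orthogonal G ↔ inDual G v := by
  simp only [LinearMap.BilinForm.mem_orthogonal_iff, symplForm_apply, inDual,
    sympl_comm v]

theorem IsStabilizer.mem_of_inDual_of_finrank_eq (hG : IsStabilizer G)
    (hcard : Module.finrank (ZMod 2) G = Fintype.card ι) {v : PauliT ι} (hv : inDual G v) :
    v ∈ G := by
  have hle : G ≤ (symplForm ι).orthogonal G := fun u hu =>
    mem_orthogonal_symplForm_iff.2 (hG u hu)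
  have hfin : Module.finrank (ZMod 2) G =
      Module.finrank (ZMod 2) ((symplForm ι).orthogonal G) := by
    rw [LinearMap.BilinForm.finrank_orthogonal symplForm_nondegenerate, finrank_pauliT, hcard]
    omega
  rw [Submodule.eq_of_le_of_finrank_eq hle hfin]
  exact mem_orthogonal_symplForm_iff.2 hv

lemma distG_le_wt {v : PauliT ι} (hv : inDual G v) (hvG : v ∉ G) : distG G ≤ wt v :=
  sInf_le ⟨v, ⟨hv, hvG⟩, rfl⟩

lemma le_distG {m : ℕ∞} (h : ∀ v, inDual G v → v ∉ G → m ≤ wt v) : m ≤ distG G :=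
  le_sInf fun _ ⟨v, ⟨hv, hvG⟩, hm⟩ => hm ▸ h v hv hvG

theorem IsStabilizer.distG_eq_top (hG : IsStabilizer G)
    (hcard : Module.finrank (ZMod 2) G = Fintype.card ι) : distG G = ⊤ :=
  top_le_iff.1 <| le_distG fun _ hv hvG =>
    absurd (hG.mem_of_inDual_of_finrank_eq hcard hv) hvG

end Distance

section Weight

lemma wt_zero : wt (0 : PauliT ι) = 0 := by
  simp [wt]

lemma IsBasisFam.Wgt_le {r : ℕ} {G : Submodule (ZMod 2) (PauliT ι)} {g : Fin r → PauliT ι}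
    (hg : IsBasisFam G g) {w : ℕ} (hw : ∀ i, wt (g i) ≤ w) : Wgt G ≤ w :=
  (iInf_le_of_le r <| iInf_le_of_le g <| iInf_le _ hg).trans <|
    Finset.sup_le fun i _ => Nat.cast_le.2 (hw i)

theorem Wgt_span_le {s : Set (PauliT ι)} {w : ℕ} (hw : ∀ v ∈ s, wt v ≤ w) :
    Wgt (Submodule.span (ZMod 2) s) ≤ w := by
  obtain ⟨b, hbs, hspan, hli⟩ := exists_linearIndependent (ZMod 2) s
  have e : Fin (Nat.card b) ≃ b := (Finite.equivFin b).symm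
  have hbasis : IsBasisFam (Submodule.span (ZMod 2) s) (fun i => (e i : PauliT ι)) := by
    refine ⟨hli.comp e e.injective, ?_⟩
    have hrange : Set.range (fun i => (e i : PauliT ι)) = b :=
      (e.surjective.range_comp Subtype.val).trans Subtype.range_coe
    rw [hrange, hspan]
  exact hbasis.Wgt_le fun i => hw _ (hbs (e i).2)

end Weight

section Restriction

/-- The restriction of a Pauli string to the qubits satisfying `q`. The two components of
`splitEquiv p` are `restrict p` and `restrict (¬ p ·)`. -/
def restrict (q : ι → Prop) : PauliT ι →ₗ[ZMod 2] PauliT {x // q x} :=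
  LinearMap.funLeft (ZMod 2) (ZMod 2 × ZMod 2) Subtype.val

omit [Fintype ι] in
lemma restrict_apply (q : ι → Prop) (v : PauliT ι) (x : {x // q x}) : restrict q v x = v x := rfl

omit [Fintype ι] in
lemma eq_of_restrict_eq {p : ι → Prop} {u v : PauliT ι} (hp : restrict p u = restrict p v)
    (hnp : restrict (¬ p ·) u = restrict (¬ p ·) v) : u = v :=
  (splitEquiv p).injective (Prod.ext hp hnp)

omit [Fintype ι] in
lemma exists_restrict_eq {p : ι → Prop} (a : PauliT {x // p x}) (b : PauliT {x // ¬ p x}) :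
    ∃ v : PauliT ι, restrict p v = a ∧ restrict (¬ p ·) v = b :=
  ⟨(splitEquiv p).symm (a, b), congrArg Prod.fst ((splitEquiv p).apply_symm_apply (a, b)),
    congrArg Prod.snd ((splitEquiv p).apply_symm_apply (a, b))⟩

lemma restrict_not_eq_zero {p : ι → Prop} {v : PauliT ι} (hv : ∀ x ∈ suppF v, p x) :
    restrict (¬ p ·) v = 0 := by
  funext x
  by_contra hx
  exact x.2 (hv x (Finset.mem_filter.2 ⟨Finset.mem_univ _, hx⟩))

lemma wt_restrict_le (q : ι → Prop) [Fintype {x // q x}] (v : PauliT ι) :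
    wt (restrict q v) ≤ wt v :=
  Finset.card_le_card_of_injOn Subtype.val
    (fun _ hx => Finset.mem_filter.2 ⟨Finset.mem_univ _, (Finset.mem_filter.1 hx).2⟩)
    Subtype.val_injective.injOn

theorem Wgt_map_restrict_span_le (q : ι → Prop) [Fintype {x // q x}] {s : Set (PauliT ι)}
    {w : ℕ} (hw : ∀ v ∈ s, wt v ≤ w) :
    Wgt ((Submodule.span (ZMod 2) s).map (restrict q)) ≤ w := by
  rw [Submodule.map_span]
  exact Wgt_span_le (Set.forall_mem_image.2 fun v hv => (wt_restrict_le q v).trans (hw v hv))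

variable {p : ι → Prop} [Fintype {x // p x}] [Fintype {x // ¬ p x}]

lemma sympl_restrict_add_sympl_restrict_not (u v : PauliT ι) :
    sympl (restrict p u) (restrict p v) + sympl (restrict (¬ p ·) u) (restrict (¬ p ·) v) =
      sympl u v := by
  simp only [sympl, restrict_apply]
  convert Fintype.sum_subtype_add_sum_subtype p fun i => (u i).1 * (v i).2 + (u i).2 * (v i).1

lemma wt_restrict_add_wt_restrict_not (v : PauliT ι) :
    wt (restrict p v) + wt (restrict (¬ p ·) v) = wt v := by
  simp only [wt, Finset.card_filter]
  convert Fintype.sum_subtype_add_sum_subtype p fun i => if v i ≠ 0 then 1 else 0 <;> rfl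

omit [Fintype {x // ¬ p x}] in
lemma sympl_restrict_of_restrict_not_eq_zero (u : PauliT ι) {v : PauliT ι}
    (hv : restrict (¬ p ·) v = 0) : sympl (restrict p u) (restrict p v) = sympl u v := by
  rw [← sympl_restrict_add_sympl_restrict_not (p := p) u v, hv, sympl_zero_right, add_zero]

end Restriction

section Tensor

lemma finrank_submodule_prod {K V W : Type*} [DivisionRing K] [AddCommGroup V] [Module K V]
    [AddCommGroup W] [Module K W] [FiniteDimensional K V] [FiniteDimensional K W]
    (P : Submodule K V) (Q : Submodule K W) :
    Module.finrank K (P.prod Q) = Module.finrank K P + Module.finrank K Q := by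
  have hinj : Function.Injective (P.subtype.prodMap Q.subtype) :=
    P.injective_subtype.prodMap Q.injective_subtype
  rw [← Module.finrank_prod, ← LinearMap.finrank_range_of_inj hinj, LinearMap.range_prodMap,
    Submodule.range_subtype, Submodule.range_subtype]

variable {p : ι → Prop} {GA : Submodule (ZMod 2) (PauliT {x // p x})}
  {GB : Submodule (ZMod 2) (PauliT {x // ¬ p x})}

omit [Fintype ι] in
lemma mem_tensorAlong_iff {v : PauliT ι} :
    v ∈ tensorAlong p GA GB ↔ restrict p v ∈ GA ∧ restrict (¬ p ·) v ∈ GB :=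
  Iff.rfl

omit [Fintype ι] in
theorem finrank_tensorAlong [Finite ι] :
    Module.finrank (ZMod 2) (tensorAlong p GA GB) =
      Module.finrank (ZMod 2) GA + Module.finrank (ZMod 2) GB := by
  rw [← finrank_submodule_prod, tensorAlong, Submodule.comap_equiv_eq_map_symm,
    LinearEquiv.finrank_map_eq]

variable [Fintype {x // p x}] [Fintype {x // ¬ p x}]

lemma inDual_tensorAlong_iff {v : PauliT ι} :
    inDual (tensorAlong p GA GB) v ↔ inDual GA (restrict p v) ∧ inDual GB (restrict (¬ p ·) v) := by
  refine ⟨fun hv => ⟨fun a ha => ?_, fun b hb => ?_⟩, fun ⟨hvA, hvB⟩ u hu => ?_⟩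
  · obtain ⟨u, rfl, hu⟩ := exists_restrict_eq a (0 : PauliT {x // ¬ p x})
    have huv := hv u (mem_tensorAlong_iff.2 ⟨ha, hu ▸ GB.zero_mem⟩)
    rwa [← sympl_restrict_add_sympl_restrict_not (p := p), hu, sympl_zero_right, add_zero] at huv
  · obtain ⟨u, hu, rfl⟩ := exists_restrict_eq (0 : PauliT {x // p x}) b
    have huv := hv u (mem_tensorAlong_iff.2 ⟨hu ▸ GA.zero_mem, hb⟩)
    rwa [← sympl_restrict_add_sympl_restrict_not (p := p), hu, sympl_zero_right, zero_add] at huv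
  · obtain ⟨huA, huB⟩ := mem_tensorAlong_iff.1 hu
    rw [← sympl_restrict_add_sympl_restrict_not (p := p), hvA _ huA, hvB _ huB, add_zero]

theorem isStabilizer_tensorAlong_iff :
    IsStabilizer (tensorAlong p GA GB) ↔ IsStabilizer GA ∧ IsStabilizer GB := by
  refine ⟨fun h => ⟨fun a ha => ?_, fun b hb => ?_⟩, fun ⟨hA, hB⟩ u ⟨huA, huB⟩ => ?_⟩
  · obtain ⟨u, rfl, hu⟩ := exists_restrict_eq a (0 : PauliT {x // ¬ p x})
    exact (inDual_tensorAlong_iff.1 (h u (mem_tensorAlong_iff.2 ⟨ha, hu ▸ GB.zero_mem⟩))).1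
  · obtain ⟨u, hu, rfl⟩ := exists_restrict_eq (0 : PauliT {x // p x}) b
    exact (inDual_tensorAlong_iff.1 (h u (mem_tensorAlong_iff.2 ⟨hu ▸ GA.zero_mem, hb⟩))).2
  · exact inDual_tensorAlong_iff.2 ⟨hA _ huA, hB _ huB⟩

theorem distG_tensorAlong : distG (tensorAlong p GA GB) = min (distG GA) (distG GB) := by
  apply le_antisymm
  · refine le_min (le_distG fun a ha haGA => ?_) (le_distG fun b hb hbGB => ?_)
    · obtain ⟨v, rfl, hv⟩ := exists_restrict_eq a (0 : PauliT {x // ¬ p x})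
      have hwt : wt v = wt (restrict p v) := by
        rw [← wt_restrict_add_wt_restrict_not (p := p) v, hv, wt_zero, add_zero]
      rw [← hwt]
      exact distG_le_wt (inDual_tensorAlong_iff.2 ⟨ha, hv ▸ inDual_zero⟩) fun h => haGA h.1
    · obtain ⟨v, hv, rfl⟩ := exists_restrict_eq (0 : PauliT {x // p x}) b
      have hwt : wt v = wt (restrict (¬ p ·) v) := by
        rw [← wt_restrict_add_wt_restrict_not (p := p) v, hv, wt_zero, zero_add]
      rw [← hwt]
      exact distG_le_wt (inDual_tensorAlong_iff.2 ⟨hv ▸ inDual_zero, hb⟩) fun h => hbGB h.2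
  · refine le_distG fun v hv hvG => ?_
    obtain ⟨hvA, hvB⟩ := inDual_tensorAlong_iff.1 hv
    by_cases hGA : restrict p v ∈ GA
    · have hGB : restrict (¬ p ·) v ∉ GB := fun h => hvG ⟨hGA, h⟩
      exact (min_le_right _ _).trans <| (distG_le_wt hvB hGB).trans <|
        Nat.cast_le.2 (wt_restrict_le _ v)
    · exact (min_le_left _ _).trans <| (distG_le_wt hvA hGA).trans <|
        Nat.cast_le.2 (wt_restrict_le _ v)

end Tensor

section Factorization

variable {p : ι → Prop} {G H : Submodule (ZMod 2) (PauliT ι)}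

omit [Fintype ι] in
lemma finrank_map_restrict (hH : ∀ h ∈ H, restrict (¬ p ·) h = 0) :
    Module.finrank (ZMod 2) (H.map (restrict p)) = Module.finrank (ZMod 2) H := by
  have hinj : Function.Injective ((restrict p).domRestrict H) := fun u v huv =>
    Subtype.ext <| eq_of_restrict_eq huv ((hH u u.2).trans (hH v v.2).symm)
  rw [← LinearMap.range_domRestrict, LinearMap.finrank_range_of_inj hinj]

variable [Fintype {x // p x}]

lemma inDual.map_restrict (hH : ∀ h ∈ H, restrict (¬ p ·) h = 0) {v : PauliT ι} (hv : inDual H v) :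
    inDual (H.map (restrict p)) (restrict p v) := by
  rintro _ ⟨h, hh, rfl⟩
  rw [sympl_restrict_of_restrict_not_eq_zero v (hH h hh), hv h hh]

theorem IsStabilizer.eq_tensorAlong (hG : IsStabilizer G) (hHG : H ≤ G)
    (hH : ∀ h ∈ H, restrict (¬ p ·) h = 0)
    (hcard : Module.finrank (ZMod 2) H = Fintype.card {x // p x}) :
    G = tensorAlong p (H.map (restrict p)) (G.map (restrict (¬ p ·))) := by
  have hdual : ∀ v ∈ G, inDual (H.map (restrict p)) (restrict p v) := fun v hv =>
    inDual.map_restrict hH fun h hh => hG v hv h (hHG hh)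
  have hstab : IsStabilizer (H.map (restrict p)) := by
    rintro _ ⟨h, hh, rfl⟩
    exact hdual h (hHG hh)
  have hrestrict : ∀ v ∈ G, restrict p v ∈ H.map (restrict p) := fun v hv =>
    hstab.mem_of_inDual_of_finrank_eq ((finrank_map_restrict hH).trans hcard) (hdual v hv)
  refine le_antisymm (fun v hv => ⟨hrestrict v hv, v, hv, rfl⟩) ?_
  rintro v ⟨⟨h, hh, hhv⟩, u, hu, huv⟩
  obtain ⟨h', hh', hhu⟩ := hrestrict u hu
  have hv : v = u - h' + h := by
    apply eq_of_restrict_eq (p := p)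
    · rw [map_add, map_sub, hhu, sub_self, zero_add]
      exact hhv.symm
    · rw [map_add, map_sub, hH h hh, hH h' hh', sub_zero, add_zero]
      exact huv.symm
  rw [hv]
  exact G.add_mem (G.sub_mem hu (hHG hh')) (hHG hh)

end Factorization

theorem discard_complete_generators_general {κ : Type*} (w : ℕ)
    (G : Submodule (ZMod 2) (PauliT ι)) (hG : IsStabilizer G)
    (g : κ → PauliT ι) (hspan : Submodule.span (ZMod 2) (Set.range g) = G)
    (hw : ∀ i, wt (g i) ≤ w)
    (I : Finset κ) (hI : LinearIndepOn (ZMod 2) g (I : Set κ))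
    (p : ι → Prop) [Fintype {x // p x}] [Fintype {x // ¬ p x}]
    (hsupp : ∀ i ∈ I, ∀ x ∈ suppF (g i), p x) (hcard : Fintype.card {x // p x} = I.card) :
    ∃ (GA : Submodule (ZMod 2) (PauliT {x // p x}))
      (GB : Submodule (ZMod 2) (PauliT {x // ¬ p x})),
      G = tensorAlong p GA GB ∧
      IsStabilizer GA ∧ Module.finrank (ZMod 2) GA = I.card ∧
      distG GA = ⊤ ∧ Wgt GA ≤ w ∧
      IsStabilizer GB ∧ Module.finrank (ZMod 2) G = I.card + Module.finrank (ZMod 2) GB ∧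
      distG GB = distG G ∧ Wgt GB ≤ w := by
  set H := Submodule.span (ZMod 2) (g '' I) with hHdef
  have hHG : H ≤ G := hspan ▸ Submodule.span_mono (Set.image_subset_range g I)
  have hH : H ≤ LinearMap.ker (restrict (¬ p ·)) := Submodule.span_le.2 <|
    Set.forall_mem_image.2 fun i hi => restrict_not_eq_zero (hsupp i hi)
  have hHrank : Module.finrank (ZMod 2) H = I.card := by
    rw [hHdef, Set.image_eq_range, finrank_span_eq_card hI]
    exact Fintype.card_coe I
  have hAfin := (finrank_map_restrict hH).trans hHrank
  have htensor := hG.eq_tensorAlong hHG hH (hHrank.trans hcard.symm)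
  obtain ⟨hA, hB⟩ := isStabilizer_tensorAlong_iff.1 (htensor ▸ hG)
  have hAdist := hA.distG_eq_top (hAfin.trans hcard.symm)
  refine ⟨_, _, htensor, hA, hAfin, hAdist, Wgt_map_restrict_span_le _ ?_, hB, ?_, ?_, ?_⟩
  · exact Set.forall_mem_image.2 fun i _ => hw i
  · rw [← hAfin, ← finrank_tensorAlong, ← htensor]
  · conv_rhs => rw [htensor, distG_tensorAlong, hAdist, top_inf_eq]
  · rw [← hspan]
    exact Wgt_map_restrict_span_le _ (Set.forall_mem_range.2 hw)

/-- if `T` generators (out of a bounded-weight basis) are jointly supported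
on exactly `T` qubits, the code factorizes as a `[[T,0]]` code tensored with an
`[[n-T, k, d]]` code, both of weight at most `w`. -/
theorem discard_complete_generators (n k T : ℕ) (d : ℕ∞) (w : ℕ) (hk : 1 ≤ k)
    (G : Submodule (ZMod 2) (Pauli n)) (hG : IsStabilizer G)
    (hdim : Module.finrank (ZMod 2) ↥G = n - k) (hdist : distG G = d)
    (g : Fin (n - k) → Pauli n) (hbasis : IsBasisFam G g)
    (hw : ∀ i, wt (g i) ≤ w)
    (hT1 : 1 ≤ T) (hT2 : T < n - k)
    (I : Finset (Fin (n - k))) (hI : I.card = T)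
    (hsupp : (I.biUnion fun i => suppF (g i)).card = T) :
    ∃ A : Finset (Fin n), A.card = T ∧
      ∃ (GA : Submodule (ZMod 2) (PauliT {x : Fin n // x ∈ A}))
        (GB : Submodule (ZMod 2) (PauliT {x : Fin n // ¬ x ∈ A})),
        G = tensorAlong (fun x => x ∈ A) GA GB ∧
        IsStabilizer GA ∧ Module.finrank (ZMod 2) ↥GA = T ∧
        distG GA = ⊤ ∧ Wgt GA ≤ (w : ℕ∞) ∧
        IsStabilizer GB ∧ Module.finrank (ZMod 2) ↥GB = (n - T) - k ∧
        distG GB = d ∧ Wgt GB ≤ (w : ℕ∞) := by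
  set A := I.biUnion fun i => suppF (g i)
  obtain ⟨GA, GB, htensor, hGA, hGAfin, hGAdist, hGAwt, hGB, hfin, hGBdist, hGBwt⟩ :=
    discard_complete_generators_general w G hG g hbasis.2 hw I (hbasis.1.linearIndepOn _) (· ∈ A)
      (fun i hi x hx => Finset.mem_biUnion.2 ⟨i, hi, hx⟩)
      ((Fintype.card_coe A).trans (hsupp.trans hI.symm))
  have hGBfin : Module.finrank (ZMod 2) GB = n - T - k := by
    rw [hdim, hI] at hfin
    omega
  exact ⟨A, hsupp, GA, GB, htensor, hGA, hGAfin.trans hI, hGAdist, hGAwt, hGB, hGBfin,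
    hGBdist.trans hdist, hGBwt⟩

end
end

section
/- Let G ⊆ P_ñ be an indecomposable stabilizer group of dimension m̃ = ñ − k̃ with k̃ ≥ 1 and distance d(G) ≥ 2, such that every nonzero element of G has weight ≥ 3, and let S = {h_1, …, h_{m̃}} be an 𝔽₂-basis of G with wt(h_i) = 3 for all i. Then for every 1 ≤ r ≤ m̃ − 1 and any r distinct elements h_{i_1}, …, h_{i_r} of S, the union of their supports satisfies |supp(h_{i_1}) ∪ … ∪ supp(h_{i_r})| ≥ r + 2. -/
open scoped Classical

noncomputable section

variable {ι : Type} [Fintype ι]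

/-!
Let `U` be the union of the supports of a nonempty proper subfamily `I`, and suppose that
`|U| ≤ |I| + 1`, so that `U` is not everything. Some generator outside `I` must meet `U` in at least
two qubits. Otherwise, if an outside generator `h j` meets `U`, it does so in a single qubit `q`, at
which it then commutes locally with all of `I`. As `G^⊥` has no element of weight one, some `h l`
anticommutes with `h j` at `q`; this `h l` lies outside `I` too, so it also commutes with all of `I`
at `q`. A one-qubit Pauli commuting with two anticommuting ones is trivial, so `I` misses `q`, which
is absurd; hence no outside generator meets `U`, and `G` splits along `U`.

A weight-three generator meeting `U` twice adds at most one qubit to it, so `I` can be enlarged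
without spoiling `|U| ≤ |I| + 1`, until a single generator `h j` is left out. The part of `h j` off
`U` has weight at most one and lies in `G^⊥`, so it vanishes and `G` splits along `U` after all.
-/

/-- The symplectic form on a single qubit, of which `sympl` is the sum over all qubits. -/
def localSympl (a b : ZMod 2 × ZMod 2) : ZMod 2 := a.1 * b.2 + a.2 * b.1

lemma sympl_eq_sum_localSympl (u v : PauliT ι) : sympl u v = ∑ q, localSympl (u q) (v q) := rfl

@[simp]
lemma localSympl_zero_left (a : ZMod 2 × ZMod 2) : localSympl 0 a = 0 := by simp [localSympl]

@[simp]
lemma localSympl_zero_right (a : ZMod 2 × ZMod 2) : localSympl a 0 = 0 := by simp [localSympl]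

lemma localSympl_self : ∀ a : ZMod 2 × ZMod 2, localSympl a a = 0 := by
  unfold localSympl; decide

lemma eq_zero_of_localSympl_eq_zero :
    ∀ {a b c : ZMod 2 × ZMod 2},
      localSympl a b ≠ 0 → localSympl a c = 0 → localSympl b c = 0 → c = 0 := by
  unfold localSympl; decide

@[simp]
lemma mem_suppF {v : PauliT ι} {q : ι} : q ∈ suppF v ↔ v q ≠ 0 := by simp [suppF]

lemma coe_suppF (v : PauliT ι) : (suppF v : Set ι) = Function.support v := by
  ext; simp

lemma suppF_nonempty {v : PauliT ι} : (suppF v).Nonempty ↔ v ≠ 0 := by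
  simp [Finset.Nonempty, Function.ne_iff]

lemma wt_eq_card_suppF (v : PauliT ι) : wt v = (suppF v).card := rfl

lemma suppF_indicator [DecidableEq ι] (U : Finset ι) (v : PauliT ι) :
    suppF ((U : Set ι).indicator v) = suppF v ∩ U := by
  ext; simp [and_comm]

lemma suppF_single [DecidableEq ι] (q : ι) {a : ZMod 2 × ZMod 2} (ha : a ≠ 0) :
    suppF (Pi.single q a) = {q} := by
  ext; simp [Pi.single_apply, ha]

lemma sympl_eq_localSympl {u v : PauliT ι} {q : ι}
    (hq : ∀ x ∈ suppF u, x ∈ suppF v → x = q) : sympl u v = localSympl (u q) (v q) := by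
  refine Fintype.sum_eq_single q fun x hx ↦ ?_
  by_cases hu : u x = 0
  · simp [hu]
  · have hv : v x = 0 := by
      by_contra hv
      exact hx (hq x (mem_suppF.2 hu) (mem_suppF.2 hv))
    simp [hv]

lemma sympl_single_left [DecidableEq ι] (q : ι) (a : ZMod 2 × ZMod 2) (v : PauliT ι) :
    sympl (Pi.single q a) v = localSympl a (v q) := by
  rw [sympl_eq_localSympl (q := q), Pi.single_eq_same]
  intro x hx _
  by_contra hxq
  simp [hxq] at hx

lemma sympl_eq_zero_of_disjoint {u v : PauliT ι} (huv : Disjoint (suppF u) (suppF v)) :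
    sympl u v = 0 := by
  refine (sympl_eq_sum_localSympl u v).trans (Finset.sum_eq_zero fun x _ ↦ ?_)
  by_cases hu : u x = 0
  · simp [hu]
  · have hv : x ∉ suppF v := Finset.disjoint_left.1 huv (mem_suppF.2 hu)
    rw [mem_suppF, not_not] at hv
    simp [hv]

lemma sympl_indicator_self (U : Set ι) (v : PauliT ι) : sympl (U.indicator v) v = 0 := by
  refine (sympl_eq_sum_localSympl _ _).trans (Finset.sum_eq_zero fun x _ ↦ ?_)
  by_cases hx : x ∈ U <;> simp [hx, localSympl_self]

/-- The symplectic form as a linear functional of its second argument, used to test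
membership in the dual on a spanning set. -/
def symplRight (u : PauliT ι) : PauliT ι →ₗ[ZMod 2] ZMod 2 where
  toFun := sympl u
  map_add' v w := by
    simp only [sympl, ← Finset.sum_add_distrib, Pi.add_apply, Prod.fst_add, Prod.snd_add]
    exact Finset.sum_congr rfl fun _ _ ↦ by ring
  map_smul' c v := by
    simp only [sympl, Finset.mul_sum, Pi.smul_apply, Prod.smul_fst, Prod.smul_snd, smul_eq_mul,
      RingHom.id_apply]
    exact Finset.sum_congr rfl fun _ _ ↦ by ring

lemma inDual_span_range {κ : Type*} {h : κ → PauliT ι} {v : PauliT ι} :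
    inDual (Submodule.span (ZMod 2) (Set.range h)) v ↔ ∀ i, sympl v (h i) = 0 := by
  change Submodule.span (ZMod 2) (Set.range h) ≤ LinearMap.ker (symplRight v) ↔ _
  rw [Submodule.span_le, Set.range_subset_iff]
  rfl

lemma le_wt_of_inDual {G : Submodule (ZMod 2) (PauliT ι)} {d : ℕ} (hd : d ≤ distG G)
    (hmin : ∀ g ∈ G, g ≠ 0 → d ≤ wt g) {v : PauliT ι} (hv : inDual G v) (hv₀ : v ≠ 0) :
    d ≤ wt v := by
  by_cases hvG : v ∈ G
  · exact hmin v hvG hv₀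
  · have hle : distG G ≤ wt v := sInf_le ⟨v, ⟨hv, hvG⟩, rfl⟩
    exact_mod_cast hd.trans hle

omit [Fintype ι] in
lemma decomposable_of_indicator_mem {G : Submodule (ZMod 2) (PauliT ι)} {U : Set ι}
    (hU : U.Nonempty) (hU' : U ≠ Set.univ) (hG : ∀ g ∈ G, U.indicator g ∈ G) :
    Decomposable G := by
  refine ⟨(· ∈ U), hU, (Set.ne_univ_iff_exists_notMem U).1 hU',
    G.map (LinearMap.fst _ _ _ ∘ₗ (splitEquiv (· ∈ U)).toLinearMap),
    G.map (LinearMap.snd _ _ _ ∘ₗ (splitEquiv (· ∈ U)).toLinearMap), le_antisymm ?_ ?_⟩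
  · exact fun g hg ↦ ⟨⟨g, hg, rfl⟩, ⟨g, hg, rfl⟩⟩
  · rintro v ⟨⟨g, hg, hgv⟩, ⟨g', hg', hgv'⟩⟩
    have hv : v = U.indicator g + (g' - U.indicator g') := by
      funext x
      by_cases hx : x ∈ U
      · have hgx : g x = v x := congrFun hgv ⟨x, hx⟩
        simp [hx, hgx]
      · have hgx : g' x = v x := congrFun hgv' ⟨x, hx⟩
        simp [hx, hgx]
    rw [hv]
    exact G.add_mem (hG g hg) (G.sub_mem hg' (hG g' hg'))

section Generators

variable {κ : Type*} {h : κ → PauliT ι}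

lemma decomposable_span_of_subset_or_disjoint {U : Finset ι} (hU : U.Nonempty)
    (hU' : U ≠ Finset.univ) (hs : ∀ i, suppF (h i) ⊆ U ∨ Disjoint (suppF (h i)) U) :
    Decomposable (Submodule.span (ZMod 2) (Set.range h)) := by
  refine decomposable_of_indicator_mem (U := U) hU (mt Finset.coe_eq_univ.1 hU') fun g hg ↦ ?_
  induction hg using Submodule.span_induction with
  | mem g hg =>
    obtain ⟨i, rfl⟩ := hg
    rcases hs i with hi | hi
    · rw [Set.indicator_eq_self.2 (by simpa [← coe_suppF] using hi)]
      exact Submodule.subset_span ⟨i, rfl⟩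
    · rw [Set.indicator_eq_zero'.2 (by simpa [← coe_suppF] using hi)]
      exact zero_mem _
  | zero => simp
  | add u v _ _ hu hv => rw [Set.indicator_add']; exact add_mem hu hv
  | smul c v _ hv =>
    have hcv : (U : Set ι).indicator (c • v) = c • (U : Set ι).indicator v :=
      Set.indicator_const_smul _ c v
    exact hcv ▸ Submodule.smul_mem _ c hv

lemma exists_localSympl_ne_zero
    (hdual : ∀ v, inDual (Submodule.span (ZMod 2) (Set.range h)) v → v ≠ 0 → 2 ≤ wt v)
    (q : ι) {a : ZMod 2 × ZMod 2} (ha : a ≠ 0) : ∃ i, localSympl a (h i q) ≠ 0 := by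
  by_contra! hcomm
  have hsingle : 2 ≤ wt (Pi.single q a : PauliT ι) :=
    hdual _ (inDual_span_range.2 fun i ↦ (sympl_single_left q a (h i)).trans (hcomm i))
      (Pi.single_eq_zero_iff.not.2 ha)
  simp [wt_eq_card_suppF, suppF_single q ha] at hsingle

variable [DecidableEq ι]

lemma disjoint_biUnion_of_card_inter_le_one {I : Finset κ}
    (hdual : ∀ v, inDual (Submodule.span (ZMod 2) (Set.range h)) v → v ≠ 0 → 2 ≤ wt v)
    (hcomm : ∀ i j, sympl (h i) (h j) = 0)
    (hone : ∀ j ∉ I, (suppF (h j) ∩ I.biUnion fun i ↦ suppF (h i)).card ≤ 1) :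
    ∀ j ∉ I, Disjoint (suppF (h j)) (I.biUnion fun i ↦ suppF (h i)) := by
  intro j hj
  rw [Finset.disjoint_left]
  intro q hjq hqU
  have hlocal : ∀ l ∉ I, q ∈ suppF (h l) → ∀ i ∈ I, localSympl (h l q) (h i q) = 0 := by
    intro l hl hlq i hi
    rw [← hcomm l i, sympl_eq_localSympl]
    intro x hxl hxi
    exact Finset.card_le_one.1 (hone l hl)
      x (Finset.mem_inter.2 ⟨hxl, Finset.mem_biUnion.2 ⟨i, hi, hxi⟩⟩)
      q (Finset.mem_inter.2 ⟨hlq, hqU⟩)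
  obtain ⟨l, hjl⟩ := exists_localSympl_ne_zero hdual q (mem_suppF.1 hjq)
  have hl : l ∉ I := fun hl ↦ hjl (hlocal j hj hjq l hl)
  have hlq : q ∈ suppF (h l) := mem_suppF.2 fun h₀ ↦ hjl (by simp [h₀])
  obtain ⟨i, hi, hiq⟩ := Finset.mem_biUnion.1 hqU
  exact mem_suppF.1 hiq
    (eq_zero_of_localSympl_eq_zero hjl (hlocal j hj hjq i hi) (hlocal l hl hlq i hi))

lemma exists_one_lt_card_inter_biUnion {I : Finset κ}
    (hindec : ¬ Decomposable (Submodule.span (ZMod 2) (Set.range h)))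
    (hdual : ∀ v, inDual (Submodule.span (ZMod 2) (Set.range h)) v → v ≠ 0 → 2 ≤ wt v)
    (hcomm : ∀ i j, sympl (h i) (h j) = 0)
    (hU : (I.biUnion fun i ↦ suppF (h i)).Nonempty)
    (hU' : (I.biUnion fun i ↦ suppF (h i)) ≠ Finset.univ) :
    ∃ j ∉ I, 1 < (suppF (h j) ∩ I.biUnion fun i ↦ suppF (h i)).card := by
  by_contra! hone
  refine hindec (decomposable_span_of_subset_or_disjoint hU hU' fun i ↦ ?_)
  by_cases hi : i ∈ I
  · exact .inl (Finset.subset_biUnion_of_mem (fun i ↦ suppF (h i)) hi)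
  · exact .inr (disjoint_biUnion_of_card_inter_le_one hdual hcomm hone i hi)

lemma suppF_subset_of_card_sdiff_le_one {U : Finset ι} {j : κ}
    (hdual : ∀ v, inDual (Submodule.span (ZMod 2) (Set.range h)) v → v ≠ 0 → 2 ≤ wt v)
    (hU : ∀ i ≠ j, suppF (h i) ⊆ U) (hj : (suppF (h j) \ U).card ≤ 1) :
    suppF (h j) ⊆ U := by
  set v : PauliT ι := (↑Uᶜ : Set ι).indicator (h j)
  have hsupp : suppF v = suppF (h j) \ U := by
    rw [suppF_indicator, Finset.sdiff_eq_inter_compl]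
  have hv : inDual (Submodule.span (ZMod 2) (Set.range h)) v := by
    refine inDual_span_range.2 fun i ↦ ?_
    by_cases hij : i = j
    · exact hij ▸ sympl_indicator_self _ _
    · exact sympl_eq_zero_of_disjoint
        (hsupp ▸ Finset.sdiff_disjoint.mono_right (hU i hij))
  rw [← Finset.sdiff_eq_empty_iff_subset, ← hsupp, ← Finset.not_nonempty_iff_eq_empty,
    suppF_nonempty]
  intro hv₀
  have hwt : 2 ≤ (suppF v).card := hdual v hv hv₀
  rw [hsupp] at hwt
  omega

end Generators

theorem support_expansion_general {κ : Type*} [Fintype κ] [DecidableEq ι] {h : κ → PauliT ι}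
    (hG : IsStabilizer (Submodule.span (ZMod 2) (Set.range h)))
    (hindec : ¬ Decomposable (Submodule.span (ZMod 2) (Set.range h)))
    (hdual : ∀ v, inDual (Submodule.span (ZMod 2) (Set.range h)) v → v ≠ 0 → 2 ≤ wt v)
    (hcard : Fintype.card κ < Fintype.card ι)
    (hne : ∀ i, h i ≠ 0) (h3 : ∀ i, wt (h i) ≤ 3)
    (I : Finset κ) (hI : I.Nonempty) (hI' : I ≠ Finset.univ) :
    I.card + 2 ≤ (I.biUnion fun i ↦ suppF (h i)).card := by
  induction I using WellFoundedGT.induction with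
  | ind I ih =>
  by_contra! hlt
  set U := I.biUnion fun i ↦ suppF (h i) with hUdef
  have hIκ : I.card < Fintype.card κ := I.card_lt_iff_ne_univ.2 hI'
  have hU : U.Nonempty := hI.biUnion fun i _ ↦ suppF_nonempty.2 (hne i)
  have hU' : U ≠ Finset.univ := U.card_lt_iff_ne_univ.1 (by omega)
  have hcomm : ∀ i j, sympl (h i) (h j) = 0 := fun i j ↦
    hG _ (Submodule.subset_span ⟨i, rfl⟩) _ (Submodule.subset_span ⟨j, rfl⟩)
  have hsub : ∀ i ∈ I, suppF (h i) ⊆ U := fun i hi ↦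
    Finset.subset_biUnion_of_mem (fun i ↦ suppF (h i)) hi
  obtain ⟨j, hj, hjU : 1 < (suppF (h j) ∩ U).card⟩ :=
    exists_one_lt_card_inter_biUnion hindec hdual hcomm hU hU'
  have hsdiff : (suppF (h j) \ U).card ≤ 1 := by
    have := Finset.card_sdiff_add_card_inter (suppF (h j)) U
    have := h3 j
    rw [wt_eq_card_suppF] at this
    omega
  by_cases hins : insert j I = Finset.univ
  · have hrest : ∀ i ≠ j, suppF (h i) ⊆ U := fun i hij ↦
      hsub i (Finset.mem_of_mem_insert_of_ne (hins ▸ Finset.mem_univ i) hij)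
    refine hindec (decomposable_span_of_subset_or_disjoint hU hU' fun i ↦ .inl ?_)
    by_cases hij : i = j
    · exact hij ▸ suppF_subset_of_card_sdiff_le_one hdual hrest hsdiff
    · exact hrest i hij
  · have hgrow := ih (insert j I) (Finset.ssubset_insert hj) (Finset.insert_nonempty j I) hins
    rw [Finset.card_insert_of_notMem hj, Finset.biUnion_insert, ← hUdef,
      ← Finset.card_sdiff_add_card] at hgrow
    omega

/-- support expansion: in an indecomposable stabilizer code with
`k ≥ 1`, distance `≥ 2`, all nonzero stabilizers of weight `≥ 3`, and a weight-3 basis,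
any `r ≤ (n-k) - 1` distinct generators are supported on at least `r + 2` qubits. -/
theorem support_expansion (n k : ℕ) (hk : 1 ≤ k)
    (G : Submodule (ZMod 2) (Pauli n)) (hG : IsStabilizer G)
    (hdim : Module.finrank (ZMod 2) ↥G = n - k) (hd : 2 ≤ distG G)
    (hindec : ¬ Decomposable G)
    (hmin : ∀ g ∈ G, g ≠ 0 → 3 ≤ wt g)
    (h : Fin (n - k) → Pauli n) (hbasis : IsBasisFam G h)
    (h3 : ∀ i, wt (h i) = 3) :
    ∀ (r : ℕ) (I : Finset (Fin (n - k))), 1 ≤ r → r ≤ n - k - 1 → I.card = r →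
      r + 2 ≤ (I.biUnion fun i => suppF (h i)).card := by
  rintro r I hr hrm rfl
  obtain ⟨-, rfl⟩ := hbasis
  refine support_expansion_general hG hindec
    (fun v ↦ le_wt_of_inDual hd fun g hg hg₀ ↦ Nat.le_of_lt (hmin g hg hg₀))
    (by simp only [Fintype.card_fin]; omega) (fun i hi ↦ ?_) (fun i ↦ (h3 i).le) I
    (Finset.card_pos.1 hr) ?_
  · simpa [hi, wt] using h3 i
  · rw [← Finset.card_lt_iff_ne_univ, Fintype.card_fin]
    omega

end
end
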